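/- arXiv:2305.17133 — 3 statements merged into one kernel-verified Lean document; each statement's English description precedes it below -/
import Mathlib

section
/- Let γ : I → ℝ³ be smooth, let V ⊆ ℝ³∖{0} be open, and let θ₁ : V → I be smooth with ⟨γ'(θ₁(ξ)), ξ⟩ = 0 on V; set v(ξ) := ⟨γ''(θ₁(ξ)), ξ⟩ and assume v(ξ) ≠ 0 on V. Set q₁(ξ) := ⟨γ(θ₁(ξ)), ξ⟩ and κ(ξ) := ⟨γ'(θ₁(ξ)), ∇θ₁(ξ)⟩. Then for all ξ ∈ V: (i) ∇θ₁(ξ) = −γ'(θ₁(ξ))/v(ξ); (ii) the Hessian matrix ∂²q₁(ξ) equals the outer product of γ'(θ₁(ξ)) with ∇θ₁(ξ) and hence has rank at most 1, with its unique possibly non-zero eigenvalue equal to κ(ξ); (iii) κ(ξ) + v(ξ)|∇θ₁(ξ)|² = 0. -/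
open MeasureTheory Real Set
open scoped RealInnerProductSpace ContDiff

noncomputable section

abbrev E3 : Type := EuclideanSpace ℝ (Fin 3)

/-- The interval `I = [-1,1]`. -/
def I1 : Set ℝ := Set.Icc (-1 : ℝ) 1

/-- The Hessian matrix of `g : ℝ³ → ℝ` at `ξ`, with entries
`∂²g(ξ)[e_i, e_j]`. -/
def hessian (g : E3 → ℝ) (ξ : E3) : Matrix (Fin 3) (Fin 3) ℝ :=
  Matrix.of fun i j =>
    iteratedFDeriv ℝ 2 g ξ ![EuclideanSpace.single i 1, EuclideanSpace.single j 1]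

theorem aux_grad (f : E3 → ℝ) (x h : E3) : (⟪gradient f x, h⟫ : ℝ) = fderiv ℝ f x h := by
  unfold gradient
  exact InnerProductSpace.toDual_symm_apply

theorem aux_inner (a b : E3) : (⟪a, b⟫ : ℝ) = (fun i => b i) ⬝ᵥ (fun i => a i) := by
  simp [PiLp.inner_apply, dotProduct]

theorem aux_eig_unique (a g : Fin 3 → ℝ) (μ : ℝ)
    (h : Module.End.HasEigenvalue (Matrix.toLin' (Matrix.vecMulVec a g)) μ) :
    μ = 0 ∨ μ = g ⬝ᵥ a := by
  obtain ⟨x, hx⟩ := h.exists_hasEigenvector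
  have h1 := hx.apply_eq_smul
  have h0 := hx.2
  have h2 : (g ⬝ᵥ x) • a = μ • x := by
    rw [← h1]
    ext i
    simp [Matrix.toLin'_apply, Matrix.vecMulVec_mulVec]
    try ring
  by_cases hm : μ = 0
  · exact Or.inl hm
  right
  have h3 : (g ⬝ᵥ x) * (g ⬝ᵥ a) = μ * (g ⬝ᵥ x) := by
    have := congrArg (fun z => g ⬝ᵥ z) h2
    simpa [dotProduct_smul] using this
  have h4 : g ⬝ᵥ x ≠ 0 := by
    intro h4
    rw [h4, zero_smul] at h2
    exact (smul_ne_zero hm h0) h2.symm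
  apply mul_left_cancel₀ h4
  rw [h3, mul_comm]

theorem aux_eig_exists (a g : Fin 3 → ℝ) :
    a ≠ 0 → Module.End.HasEigenvalue (Matrix.toLin' (Matrix.vecMulVec a g)) (g ⬝ᵥ a) := by
  intro ha
  refine Module.End.hasEigenvalue_of_hasEigenvector (x := a) ⟨?_, ha⟩
  rw [Module.End.mem_eigenspace_iff]
  ext i
  simp [Matrix.toLin'_apply, Matrix.vecMulVec_mulVec]
  try ring

theorem aux_eig_zero (g : Fin 3 → ℝ) :
    Module.End.HasEigenvalue (Matrix.toLin' (Matrix.vecMulVec (0 : Fin 3 → ℝ) g)) 0 := by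
  refine Module.End.hasEigenvalue_of_hasEigenvector (x := fun _ => 1) ⟨?_, ?_⟩
  · rw [Module.End.mem_eigenspace_iff]
    simp
  · intro h
    simpa using congrFun h 0

/-- the Hessian of `q₁` is a rank-one outer product with unique
possibly non-zero eigenvalue `κ`. -/
theorem hessian_q1_rank_one
    (γ : ℝ → E3) (hγ : ContDiff ℝ (⊤ : ℕ∞) γ)
    (V : Set E3) (hVopen : IsOpen V) (hV0 : (0:E3) ∉ V)
    (θ₁ : E3 → ℝ) (hθ₁sm : ContDiffOn ℝ (⊤ : ℕ∞) θ₁ V)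
    (hθ₁map : ∀ ξ ∈ V, θ₁ ξ ∈ I1)
    (hθ₁root : ∀ ξ ∈ V, ⟪deriv γ (θ₁ ξ), ξ⟫ = 0)
    (hv : ∀ ξ ∈ V, (⟪iteratedDeriv 2 γ (θ₁ ξ), ξ⟫ : ℝ) ≠ 0) :
    ∀ ξ ∈ V,
      -- (i) ∇θ₁(ξ) = -γ'(θ₁(ξ)) / v(ξ)
      gradient θ₁ ξ = (-(⟪iteratedDeriv 2 γ (θ₁ ξ), ξ⟫ : ℝ)⁻¹) • deriv γ (θ₁ ξ) ∧
      -- (ii) the Hessian of q₁ is the outer product γ'(θ₁(ξ)) (∇θ₁(ξ))ᵀ ...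
      hessian (fun ζ => (⟪γ (θ₁ ζ), ζ⟫ : ℝ)) ξ
        = Matrix.vecMulVec (fun i => deriv γ (θ₁ ξ) i) (fun i => gradient θ₁ ξ i) ∧
      -- ... hence it has rank at most 1 ...
      (hessian (fun ζ => (⟪γ (θ₁ ζ), ζ⟫ : ℝ)) ξ).rank ≤ 1 ∧
      -- ... and its unique possibly non-zero eigenvalue is κ(ξ) = ⟨γ'(θ₁(ξ)), ∇θ₁(ξ)⟩:
      (∀ μ : ℝ, Module.End.HasEigenvalue
          (Matrix.toLin' (hessian (fun ζ => (⟪γ (θ₁ ζ), ζ⟫ : ℝ)) ξ)) μ →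
        μ = 0 ∨ μ = (⟪deriv γ (θ₁ ξ), gradient θ₁ ξ⟫ : ℝ)) ∧
      Module.End.HasEigenvalue
        (Matrix.toLin' (hessian (fun ζ => (⟪γ (θ₁ ζ), ζ⟫ : ℝ)) ξ))
        (⟪deriv γ (θ₁ ξ), gradient θ₁ ξ⟫ : ℝ) ∧
      -- (iii) κ(ξ) + v(ξ) |∇θ₁(ξ)|² = 0
      (⟪deriv γ (θ₁ ξ), gradient θ₁ ξ⟫ : ℝ)
        + (⟪iteratedDeriv 2 γ (θ₁ ξ), ξ⟫ : ℝ) * ‖gradient θ₁ ξ‖ ^ 2 = 0 := by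
  
  have hθd : ∀ ζ ∈ V, HasFDerivAt θ₁ (fderiv ℝ θ₁ ζ) ζ := fun ζ hζ =>
    ((hθ₁sm.contDiffAt (hVopen.mem_nhds hζ)).differentiableAt (by simp)).hasFDerivAt
  have hγd : ∀ t, HasDerivAt γ (deriv γ t) t := fun t =>
    (hγ.differentiable (by simp) t).hasDerivAt
  have hγ2 : ∀ t, HasDerivAt (deriv γ) (iteratedDeriv 2 γ t) t := by
    intro t
    have h1 : Differentiable ℝ (iteratedDeriv 1 γ) :=
      hγ.differentiable_iteratedDeriv 1 (by exact_mod_cast WithTop.coe_lt_top _)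
    rw [iteratedDeriv_one] at h1
    rw [iteratedDeriv_succ, iteratedDeriv_one]
    exact (h1 t).hasDerivAt
  have key : ∀ ζ ∈ V, ∀ h : E3, fderiv ℝ θ₁ ζ h * ⟪iteratedDeriv 2 γ (θ₁ ζ), ζ⟫
      + ⟪deriv γ (θ₁ ζ), h⟫ = 0 := by
    intro ζ hζ h
    have h1 := ((hγ2 (θ₁ ζ)).hasFDerivAt.comp ζ (hθd ζ hζ)).inner ℝ (hasFDerivAt_id ζ)
    have h2 : HasFDerivAt (fun x => (⟪(deriv γ ∘ θ₁) x, id x⟫ : ℝ)) (0 : E3 →L[ℝ] ℝ) ζ := by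
      refine (hasFDerivAt_const (0 : ℝ) ζ).congr_of_eventuallyEq ?_
      filter_upwards [hVopen.mem_nhds hζ] with x hx
      exact hθ₁root x hx
    have h3 := congrArg (fun L : E3 →L[ℝ] ℝ => L h) (h1.unique h2)
    simp [inner_smul_left] at h3
    linarith
  have hq : ∀ ζ ∈ V, fderiv ℝ (fun ζ => (⟪γ (θ₁ ζ), ζ⟫ : ℝ)) ζ = innerSL ℝ (γ (θ₁ ζ)) := by
    intro ζ hζ
    have h1 := ((hγd (θ₁ ζ)).hasFDerivAt.comp ζ (hθd ζ hζ)).inner ℝ (hasFDerivAt_id ζ)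
    have h2 := h1.fderiv
    simp only [Function.comp_apply, id] at h2
    rw [h2]
    ext h
    simp [inner_smul_left, hθ₁root ζ hζ]
  intro ξ hξ
  have hvξ := hv ξ hξ
  have hi : gradient θ₁ ξ
      = (-(⟪iteratedDeriv 2 γ (θ₁ ξ), ξ⟫ : ℝ)⁻¹) • deriv γ (θ₁ ξ) := by
    refine ext_inner_right ℝ fun h => ?_
    rw [aux_grad, inner_smul_left]
    have := key ξ hξ h
    simp only [conj_trivial]
    field_simp
    linarith
  have hii : hessian (fun ζ => (⟪γ (θ₁ ζ), ζ⟫ : ℝ)) ξ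
        = Matrix.vecMulVec (fun i => deriv γ (θ₁ ξ) i) (fun i => gradient θ₁ ξ i) := by
    have h1 : HasFDerivAt (fun ζ => innerSL ℝ (γ (θ₁ ζ))) _ ξ :=
      (innerSL ℝ (E := E3)).hasFDerivAt.comp ξ
        ((hγd (θ₁ ξ)).hasFDerivAt.comp ξ (hθd ξ hξ))
    have h2 : fderiv ℝ (fderiv ℝ (fun ζ => (⟪γ (θ₁ ζ), ζ⟫ : ℝ))) ξ = _ :=
      (h1.congr_of_eventuallyEq (by
        filter_upwards [hVopen.mem_nhds hξ] with x hx
        exact hq x hx)).fderiv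
    ext i j
    have h3 : fderiv ℝ θ₁ ξ (EuclideanSpace.single i 1) = gradient θ₁ ξ i := by
      rw [← aux_grad, EuclideanSpace.inner_single_right]
      simp
    have h4 : (innerSL ℝ (deriv γ (θ₁ ξ))) (EuclideanSpace.single j 1) = deriv γ (θ₁ ξ) j := by
      rw [innerSL_apply_apply, EuclideanSpace.inner_single_right]
      simp
    simp only [hessian, Matrix.of_apply, iteratedFDeriv_two_apply, h2, Matrix.vecMulVec_apply]
    simp [h3, h4]
    rw [hi]
    simp
    ring
  have hk : (⟪deriv γ (θ₁ ξ), gradient θ₁ ξ⟫ : ℝ)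
      = (fun i => gradient θ₁ ξ i) ⬝ᵥ (fun i => deriv γ (θ₁ ξ) i) := aux_inner _ _
  refine ⟨hi, hii, ?_, ?_, ?_, ?_⟩
  · rw [hii]
    exact Matrix.rank_vecMulVec_le _ _
  · intro μ hμ
    rw [hii] at hμ
    rw [hk]
    exact aux_eig_unique _ _ μ hμ
  · rw [hii, hk]
    by_cases ha : (fun i => deriv γ (θ₁ ξ) i) = (0 : Fin 3 → ℝ)
    · rw [ha, dotProduct_zero]
      exact aux_eig_zero _
    · exact aux_eig_exists _ _ ha
  · rw [hi, inner_smul_right, norm_smul, mul_pow, real_inner_self_eq_norm_sq]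
    simp only [norm_neg, norm_inv, Real.norm_eq_abs, inv_pow, sq_abs]
    field_simp
    ring
end
end

section
/- Let γ : I → ℝ³ be a smooth non-degenerate curve and let σ ∈ I, 0 < λ < 1 with [σ−λ, σ+λ] ⊆ I. Then for all s ∈ I and all j ≥ 1 and ξ ∈ ℝ³: (i) ⟨γ_{σ,λ}^{(j)}(s), ξ⟩ = λ^j ⟨γ^{(j)}(σ + λs), ([γ]_{σ,λ})^{−⊤} ξ⟩; and (ii) det(γ_{σ,λ}'(s), γ_{σ,λ}''(s), γ_{σ,λ}'''(s)) = det(γ'(σ+λs), γ''(σ+λs), γ'''(σ+λs)) / det(γ'(σ), γ''(σ), γ'''(σ)). In particular, γ_{σ,λ} is also non-degenerate. -/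
open MeasureTheory Real Set
open scoped Matrix ContDiff

noncomputable section

/-- We work with `ℝ³` realised as `Fin 3 → ℝ`, with the dot product pairing. -/
abbrev V3 : Type := Fin 3 → ℝ

/-- Determinant of three vectors in `ℝ³` (as columns). -/
def det3 (v w z : V3) : ℝ :=
  Matrix.det !![v 0, w 0, z 0; v 1, w 1, z 1; v 2, w 2, z 2]

/-- The matrix `[γ]_σ` with columns `γ'(σ), γ''(σ), γ'''(σ)`. -/
def Gmat (γ : ℝ → V3) (σ : ℝ) : Matrix (Fin 3) (Fin 3) ℝ :=
  Matrix.of fun i j => iteratedDeriv ((j : ℕ) + 1) γ σ i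

/-- The diagonal matrix `D_λ = diag(λ, λ², λ³)`. -/
def Dmat (l : ℝ) : Matrix (Fin 3) (Fin 3) ℝ := Matrix.diagonal ![l, l ^ 2, l ^ 3]

/-- `[γ]_{σ,λ} = [γ]_σ D_λ`. -/
def Gmat' (γ : ℝ → V3) (σ l : ℝ) : Matrix (Fin 3) (Fin 3) ℝ := Gmat γ σ * Dmat l

/-- The `(σ,λ)`-rescaled curve `γ_{σ,λ}(s) = [γ]_{σ,λ}^{-1}(γ(σ+λs) - γ(σ))`. -/
def curveResc (γ : ℝ → V3) (σ l : ℝ) : ℝ → V3 :=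
  fun s => (Gmat' γ σ l)⁻¹ *ᵥ (γ (σ + l * s) - γ σ)

theorem aux_deriv (A : Matrix (Fin 3) (Fin 3) ℝ) (f : ℝ → V3) (hf : Differentiable ℝ f)
    (a σ l : ℝ) (c : V3) :
    deriv (fun s => a • (A *ᵥ (f (σ + l * s) - c)))
      = fun s => (a * l) • (A *ᵥ (deriv f (σ + l * s) - 0)) := by
  funext s
  have h1 : HasDerivAt (fun s : ℝ => σ + l * s) l s := by
    simpa using ((hasDerivAt_id s).const_mul l).const_add σ
  have h2 : HasDerivAt (fun s : ℝ => f (σ + l * s) - c) (l • deriv f (σ + l * s)) s :=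
    ((hf (σ + l * s)).hasDerivAt.scomp s h1).sub_const c
  have h3 := ((Matrix.mulVecLin A).toContinuousLinearMap.hasFDerivAt.comp_hasDerivAt s h2)
  have h4 := (h3.const_smul a).deriv
  have h5 : (Matrix.mulVecLin A).toContinuousLinearMap (l • deriv f (σ + l * s))
      = l • (A *ᵥ deriv f (σ + l * s)) := by
    simp [Matrix.mulVec_smul]
  rw [h5, smul_smul] at h4
  rw [sub_zero]
  exact h4

theorem aux_iter (γ : ℝ → V3) (hγ : ContDiff ℝ (⊤ : ℕ∞) γ) (σ l : ℝ) (j : ℕ) :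
    iteratedDeriv (j + 1) (curveResc γ σ l) = fun s =>
      (l ^ (j + 1)) • ((Gmat' γ σ l)⁻¹ *ᵥ (iteratedDeriv (j + 1) γ (σ + l * s) - 0)) := by
  induction j with
  | zero =>
    have h := aux_deriv (Gmat' γ σ l)⁻¹ γ (hγ.differentiable (by simp)) 1 σ l (γ σ)
    simp only [one_smul, one_mul] at h
    simp only [zero_add, iteratedDeriv_one, pow_one]
    exact h
  | succ k ih =>
    rw [iteratedDeriv_succ, ih, aux_deriv _ _ (hγ.differentiable_iteratedDeriv (k + 1)
      (by exact_mod_cast WithTop.coe_lt_top _))]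
    simp only [← iteratedDeriv_succ, ← pow_succ]

theorem aux_det (A : Matrix (Fin 3) (Fin 3) ℝ) (a b c : ℝ) (u v w : V3) :
    det3 (a • (A *ᵥ u)) (b • (A *ᵥ v)) (c • (A *ᵥ w))
      = a * b * c * (A.det * det3 u v w) := by
  simp [det3, Matrix.det_fin_three, Matrix.mulVec, dotProduct, Fin.sum_univ_three]
  ring

theorem aux_detG (γ : ℝ → V3) (σ l : ℝ) :
    (Gmat' γ σ l).det = l ^ 6 *
      det3 (iteratedDeriv 1 γ σ) (iteratedDeriv 2 γ σ) (iteratedDeriv 3 γ σ) := by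
  rw [Gmat', Matrix.det_mul, Dmat, Matrix.det_diagonal]
  simp [Fin.prod_univ_three, det3, Gmat, Matrix.det_fin_three]
  ring

/-- properties of the rescaled curve `γ_{σ,λ}`. -/
theorem rescaled_curve_properties
    (γ : ℝ → V3) (hγ : ContDiff ℝ (⊤ : ℕ∞) γ)
    (c₀ : ℝ) (hc₀ : 0 < c₀)
    (hnondeg : ∀ s ∈ I1,
      c₀ ≤ |det3 (iteratedDeriv 1 γ s) (iteratedDeriv 2 γ s) (iteratedDeriv 3 γ s)|)
    (σ l : ℝ) (hσ : σ ∈ I1) (hl0 : 0 < l) (hl1 : l < 1)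
    (hIcc : Set.Icc (σ - l) (σ + l) ⊆ I1) :
    (∀ s ∈ I1, ∀ j : ℕ, 1 ≤ j → ∀ ξ : V3,
      iteratedDeriv j (curveResc γ σ l) s ⬝ᵥ ξ
        = l ^ j * (iteratedDeriv j γ (σ + l * s) ⬝ᵥ (((Gmat' γ σ l)⁻¹)ᵀ *ᵥ ξ))) ∧
    (∀ s ∈ I1,
      det3 (iteratedDeriv 1 (curveResc γ σ l) s) (iteratedDeriv 2 (curveResc γ σ l) s)
          (iteratedDeriv 3 (curveResc γ σ l) s)
        = det3 (iteratedDeriv 1 γ (σ + l * s)) (iteratedDeriv 2 γ (σ + l * s))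
            (iteratedDeriv 3 γ (σ + l * s))
          / det3 (iteratedDeriv 1 γ σ) (iteratedDeriv 2 γ σ) (iteratedDeriv 3 γ σ)) ∧
    -- in particular, γ_{σ,λ} is non-degenerate:
    (∃ c₀' : ℝ, 0 < c₀' ∧ ∀ s ∈ I1,
      c₀' ≤ |det3 (iteratedDeriv 1 (curveResc γ σ l) s) (iteratedDeriv 2 (curveResc γ σ l) s)
        (iteratedDeriv 3 (curveResc γ σ l) s)|) := by
  have key : ∀ s ∈ I1,
      det3 (iteratedDeriv 1 (curveResc γ σ l) s) (iteratedDeriv 2 (curveResc γ σ l) s)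
          (iteratedDeriv 3 (curveResc γ σ l) s)
        = det3 (iteratedDeriv 1 γ (σ + l * s)) (iteratedDeriv 2 γ (σ + l * s))
            (iteratedDeriv 3 γ (σ + l * s))
          / det3 (iteratedDeriv 1 γ σ) (iteratedDeriv 2 γ σ) (iteratedDeriv 3 γ σ) := by
    intro s hs
    have hd : det3 (iteratedDeriv 1 γ σ) (iteratedDeriv 2 γ σ) (iteratedDeriv 3 γ σ) ≠ 0 := by
      intro h
      have := hnondeg σ hσ
      rw [h, abs_zero] at this
      linarith
    have h1 := congrFun (aux_iter γ hγ σ l 0) s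
    have h2 := congrFun (aux_iter γ hγ σ l 1) s
    have h3 := congrFun (aux_iter γ hγ σ l 2) s
    norm_num only [sub_zero] at h1 h2 h3
    rw [h1, h2, h3, aux_det, Matrix.det_nonsing_inv, Ring.inverse_eq_inv', aux_detG]
    field_simp
  refine ⟨?_, key, ?_⟩
  · intro s hs j hj ξ
    obtain ⟨k, rfl⟩ : ∃ k, j = k + 1 := ⟨j - 1, by omega⟩
    rw [aux_iter γ hγ]
    beta_reduce
    rw [sub_zero, smul_dotProduct, smul_eq_mul, Matrix.mulVec_transpose,
      dotProduct_comm, Matrix.dotProduct_mulVec, dotProduct_comm]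
  · have hpos : 0 < |det3 (iteratedDeriv 1 γ σ) (iteratedDeriv 2 γ σ) (iteratedDeriv 3 γ σ)| :=
      hc₀.trans_le (hnondeg σ hσ)
    refine ⟨_, div_pos hc₀ hpos, fun s hs => ?_⟩
    rw [key s hs, abs_div]
    have hm : σ + l * s ∈ I1 := by
      apply hIcc
      obtain ⟨ha, hb⟩ := hs
      constructor <;> nlinarith
    have := hnondeg _ hm
    gcongr
end
end

section
/- Let γ : I → ℝ³ be a smooth non-degenerate curve, σ ∈ I, 0 < λ < 1 with [σ−λ, σ+λ] ⊆ I, and let a ∈ C^∞((ℝ³∖{0}) × ℝ × ℝ) with a(ξ; t; ·) compactly supported in the interior of I for each (ξ,t). Define a_{σ,λ}(ξ; t; s) := a(([γ]_{σ,λ})^{−⊤} ξ; t; σ + λs) and f_{σ,λ} := f ∘ [γ]_{σ,λ}. Then for every Schwartz function f on ℝ³, every t ∈ ℝ and every x ∈ ℝ³: m_γ[a](D; t) f(x) = λ · ( m_{γ_{σ,λ}}[a_{σ,λ}](D; t) f_{σ,λ} ) ( [γ]_{σ,λ}^{−1} (x − t γ(σ)) ). -/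
open MeasureTheory Real Set
open scoped Matrix ContDiff

noncomputable section

/-- The Fourier transform on `ℝ³` (dot product pairing, paper's convention). -/
def ftr (f : V3 → ℂ) (ξ : V3) : ℂ :=
  ∫ x : V3, Complex.exp (-Complex.I * ((x ⬝ᵥ ξ : ℝ) : ℂ)) * f x

/-- The Fourier multiplier operator `m(D)`. -/
def multOp (m : V3 → ℂ) (f : V3 → ℂ) (x : V3) : ℂ :=
  (((2 * Real.pi)⁻¹ ^ 3 : ℝ) : ℂ) *
    ∫ ξ : V3, Complex.exp (Complex.I * ((x ⬝ᵥ ξ : ℝ) : ℂ)) * m ξ * ftr f ξ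

/-- The multiplier `m_γ[a](ξ;t) = ∫ e^{-it⟨γ(s),ξ⟩} a(ξ;t;s) ρ(t) ds`. -/
def mSym (γ : ℝ → V3) (ρ : ℝ → ℝ) (a : V3 → ℝ → ℝ → ℂ) (ξ : V3) (t : ℝ) : ℂ :=
  ∫ s : ℝ, Complex.exp (-Complex.I * (t : ℂ) * ((γ s ⬝ᵥ ξ : ℝ) : ℂ)) * a ξ t s * ((ρ t : ℝ) : ℂ)

/-- The rescaled symbol `a_{σ,λ}(ξ;t;s) = a([γ]_{σ,λ}^{-⊤} ξ; t; σ + λs)`. -/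
def symResc (γ : ℝ → V3) (σ l : ℝ) (a : V3 → ℝ → ℝ → ℂ) : V3 → ℝ → ℝ → ℂ :=
  fun ξ t s => a (((Gmat' γ σ l)⁻¹)ᵀ *ᵥ ξ) t (σ + l * s)

theorem integral_comp_mulVec_aux (M : Matrix (Fin 3) (Fin 3) ℝ) (hM : M.det ≠ 0) (g : V3 → ℂ) :
    ∫ y : V3, g (M *ᵥ y) = ((|M.det|⁻¹ : ℝ) : ℂ) * ∫ x : V3, g x := by
  have h1 := Real.map_matrix_volume_pi_eq_smul_volume_pi hM
  have hu : IsUnit M.det := isUnit_iff_ne_zero.mpr hM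
  let e : V3 ≃L[ℝ] V3 := (Matrix.toLinearEquiv' M
    (Matrix.invertibleOfIsUnitDet M hu)).toContinuousLinearEquiv
  have he : ∀ y, e y = M *ᵥ y := fun y => rfl
  have h2 : Measure.map e (volume : Measure V3) = Measure.map (Matrix.toLin' M) volume := rfl
  have h3 := (e.toHomeomorph.measurableEmbedding).integral_map (μ := (volume : Measure V3)) g
  have h4 : ∫ y : V3, g (M *ᵥ y) = ∫ y, g y ∂(Measure.map e (volume : Measure V3)) := h3.symm
  rw [h4, h2, h1, integral_smul_measure, ENNReal.toReal_ofReal (abs_nonneg _), abs_inv,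
    Complex.real_smul]

theorem dot_aux (A : Matrix (Fin 3) (Fin 3) ℝ) (u v : V3) :
    (A *ᵥ u) ⬝ᵥ v = u ⬝ᵥ (Aᵀ *ᵥ v) := by
  rw [Matrix.mulVec_transpose, dotProduct_comm, Matrix.dotProduct_mulVec, dotProduct_comm]

theorem ftr_aux (A : Matrix (Fin 3) (Fin 3) ℝ) (hA : A.det ≠ 0) (f : V3 → ℂ) (η : V3) :
    ftr (fun y => f (A *ᵥ y)) η = ((|A.det|⁻¹ : ℝ) : ℂ) * ftr f ((A⁻¹)ᵀ *ᵥ η) := by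
  unfold ftr
  rw [← integral_comp_mulVec_aux A hA]
  refine integral_congr_ae (Filter.Eventually.of_forall fun y => ?_)
  have hu : IsUnit A.det := isUnit_iff_ne_zero.mpr hA
  have : (A *ᵥ y) ⬝ᵥ ((A⁻¹)ᵀ *ᵥ η) = y ⬝ᵥ η := by
    rw [← dot_aux, Matrix.mulVec_mulVec, Matrix.nonsing_inv_mul _ hu, Matrix.one_mulVec]
  simp only [this]

theorem mSym_aux (γ : ℝ → V3) (σ l : ℝ) (hl : 0 < l) (ρ : ℝ → ℝ) (a : V3 → ℝ → ℝ → ℂ)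
    (η : V3) (t : ℝ) :
    (l : ℂ) * mSym (curveResc γ σ l) ρ (symResc γ σ l a) η t =
      Complex.exp (Complex.I * t * ((γ σ ⬝ᵥ (((Gmat' γ σ l)⁻¹)ᵀ *ᵥ η) : ℝ) : ℂ)) *
        mSym γ ρ a (((Gmat' γ σ l)⁻¹)ᵀ *ᵥ η) t := by
  unfold mSym curveResc symResc
  simp only [dot_aux]
  set ξ := ((Gmat' γ σ l)⁻¹)ᵀ *ᵥ η
  let g : ℝ → ℂ := fun s =>
    Complex.exp (-Complex.I * (t : ℂ) * (((γ s - γ σ) ⬝ᵥ ξ : ℝ) : ℂ)) * a ξ t s * ((ρ t : ℝ) : ℂ)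
  have h1 : ∫ s : ℝ, g (σ + l * s) = ((l⁻¹ : ℝ) : ℂ) * ∫ s, g s := by
    have := Measure.integral_comp_mul_left (fun s => g (σ + s)) l
    rw [this, integral_add_left_eq_self (fun s => g s) σ, abs_of_pos (inv_pos.mpr hl),
      Complex.real_smul]
  have h2 : ∫ s : ℝ, g s = Complex.exp (Complex.I * t * ((γ σ ⬝ᵥ ξ : ℝ) : ℂ)) *
      ∫ s : ℝ, Complex.exp (-Complex.I * (t : ℂ) * ((γ s ⬝ᵥ ξ : ℝ) : ℂ)) * a ξ t s *
        ((ρ t : ℝ) : ℂ) := by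
    rw [← integral_const_mul]
    refine integral_congr_ae (Filter.Eventually.of_forall fun s => ?_)
    simp only [g, ← mul_assoc]
    rw [← Complex.exp_add, sub_dotProduct]
    congr 3
    push_cast
    ring
  change (l : ℂ) * ∫ s : ℝ, g (σ + l * s) = _
  rw [h1, h2, ← mul_assoc, ← Complex.ofReal_mul, mul_inv_cancel₀ hl.ne']
  simp

theorem det_aux (γ : ℝ → V3) (σ l : ℝ) (hl : 0 < l)
    (h : det3 (iteratedDeriv 1 γ σ) (iteratedDeriv 2 γ σ) (iteratedDeriv 3 γ σ) ≠ 0) :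
    (Gmat' γ σ l).det ≠ 0 := by
  have h1 : Gmat γ σ = !![iteratedDeriv 1 γ σ 0, iteratedDeriv 2 γ σ 0, iteratedDeriv 3 γ σ 0;
      iteratedDeriv 1 γ σ 1, iteratedDeriv 2 γ σ 1, iteratedDeriv 3 γ σ 1;
      iteratedDeriv 1 γ σ 2, iteratedDeriv 2 γ σ 2, iteratedDeriv 3 γ σ 2] := by
    ext i j
    fin_cases i <;> fin_cases j <;> rfl
  unfold Gmat'
  rw [Matrix.det_mul]
  refine mul_ne_zero (by rw [h1]; exact h) ?_
  unfold Dmat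
  rw [Matrix.det_diagonal, Fin.prod_univ_three]
  simp [hl.ne']

/-- the rescaling identity for the multiplier operators. -/
theorem multiplier_rescaling_identity
    (γ : ℝ → V3) (hγ : ContDiff ℝ (⊤ : ℕ∞) γ)
    (c₀ : ℝ) (hc₀ : 0 < c₀)
    (hnondeg : ∀ s ∈ I1,
      c₀ ≤ |det3 (iteratedDeriv 1 γ s) (iteratedDeriv 2 γ s) (iteratedDeriv 3 γ s)|)
    (σ l : ℝ) (hσ : σ ∈ I1) (hl0 : 0 < l) (hl1 : l < 1)
    (hIcc : Set.Icc (σ - l) (σ + l) ⊆ I1)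
    (ρ : ℝ → ℝ) (hρsm : ContDiff ℝ (⊤ : ℕ∞) ρ) (hρc : HasCompactSupport ρ)
    (hρsupp : Function.support ρ ⊆ Set.Ioo (1/2 : ℝ) 4)
    (a : V3 → ℝ → ℝ → ℂ)
    (ha : ContDiffOn ℝ (⊤ : ℕ∞) (fun p : V3 × ℝ × ℝ => a p.1 p.2.1 p.2.2)
      {p : V3 × ℝ × ℝ | p.1 ≠ 0})
    (hasupp : ∀ ξ t, Function.support (fun s => a ξ t s) ⊆ Set.Ioo (-1 : ℝ) 1) :
    ∀ (f : SchwartzMap V3 ℂ) (t : ℝ) (x : V3),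
      multOp (fun ξ => mSym γ ρ a ξ t) (⇑f) x
        = (l : ℂ) *
            multOp (fun ξ => mSym (curveResc γ σ l) ρ (symResc γ σ l a) ξ t)
              (fun y => f (Gmat' γ σ l *ᵥ y))
              ((Gmat' γ σ l)⁻¹ *ᵥ (x - t • γ σ)) := by
  intro f t x
  have hdet : (Gmat' γ σ l).det ≠ 0 := det_aux γ σ l hl0 fun h => by
    have := hnondeg σ hσ
    rw [h, abs_zero] at this
    linarith
  have hmS := mSym_aux γ σ l hl0 ρ a
  unfold multOp
  simp only [ftr_aux _ hdet, dot_aux]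
  set A := Gmat' γ σ l
  have hB : ((A⁻¹)ᵀ).det ≠ 0 := by
    rw [Matrix.det_transpose, Matrix.det_nonsing_inv, Ring.inverse_eq_inv']
    exact inv_ne_zero hdet
  have hBd : |((A⁻¹)ᵀ).det| = |A.det|⁻¹ := by
    rw [Matrix.det_transpose, Matrix.det_nonsing_inv, Ring.inverse_eq_inv', abs_inv]
  have key := integral_comp_mulVec_aux ((A⁻¹)ᵀ) hB
    (fun ξ => Complex.exp (Complex.I * ((x ⬝ᵥ ξ : ℝ) : ℂ)) * mSym γ ρ a ξ t * ftr f ξ)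
  rw [hBd, inv_inv] at key
  have hd : ((|A.det| : ℝ) : ℂ) ≠ 0 := by
    rw [Complex.ofReal_ne_zero]; exact abs_ne_zero.mpr hdet
  rw [mul_left_comm]
  congr 1
  rw [← mul_right_inj' hd, ← key, ← mul_assoc, ← integral_const_mul]
  refine integral_congr_ae (Filter.Eventually.of_forall fun η => ?_)
  have h := hmS η t
  have he : Complex.exp (Complex.I * ((x ⬝ᵥ ((A⁻¹)ᵀ *ᵥ η) : ℝ) : ℂ)) =
      Complex.exp (Complex.I * (((x - t • γ σ) ⬝ᵥ ((A⁻¹)ᵀ *ᵥ η) : ℝ) : ℂ)) *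
      Complex.exp (Complex.I * t * ((γ σ ⬝ᵥ ((A⁻¹)ᵀ *ᵥ η) : ℝ) : ℂ)) := by
    rw [← Complex.exp_add, sub_dotProduct, smul_dotProduct]
    congr 1
    push_cast [smul_eq_mul]
    ring
  simp only
  rw [he, mul_assoc (Complex.exp _) (Complex.exp _), ← h]
  push_cast
  field_simp
end
end
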